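/- arXiv:1310.0528 — 6 statements merged into one kernel-verified Lean document; each statement's English description precedes it below -/
import Mathlib

section
/- Let A and B be abelian categories and let f⁺ : B ⥤ A be an additive exact functor; let f̃⁺ : D⁺(B) ⥤ D⁺(A) denote the functor it induces on bounded-below derived categories. Suppose given a functor f₊ : D⁺(A) ⥤ D⁺(B) together with an adjunction f̃⁺ ⊣ f₊. Then for every object X of A, regarded as a complex concentrated in degree 0: (i) Hⁱ(f₊(X)) = 0 for all i < 0; (ii) there is a bijection, natural in Y ∈ B, Hom_A(f⁺(Y), X) ≃ Hom_B(Y, H⁰(f₊(X))). In particular, if f⁺ admits a right adjoint f⁎ : A ⥤ B at the level of abelian categories, then H⁰(f₊(X)) is naturally isomorphic to f⁎(X). -/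
open CategoryTheory CategoryTheory.Limits

universe w v u

variable (C : Type u) [Category.{v} C] [Abelian C] [HasDerivedCategory.{w} C]

/-- The property of an object of the derived category of having bounded-below cohomology;
the objects of `D⁺(C)` are the objects of `D(C)` satisfying this property. -/
def IsBoundedBelowCohomology (M : DerivedCategory C) : Prop :=
  ∃ n : ℤ, ∀ i < n, IsZero ((DerivedCategory.homologyFunctor C i).obj M)

/-- The bounded-below derived category `D⁺(C)`, regarded as the full subcategory of the
(unbounded) derived category `D(C)` of objects with bounded-below cohomology. -/
abbrev DPlus := ObjectProperty.FullSubcategory (IsBoundedBelowCohomology C)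

/-- The inclusion `D⁺(C) ⥤ D(C)` of the bounded-below derived category as a full
subcategory of the unbounded derived category. -/
noncomputable abbrev DPlusIncl : DPlus C ⥤ DerivedCategory C := ObjectProperty.ι _

lemma singleFunctor_mem_isBoundedBelowCohomology (X : C) :
    IsBoundedBelowCohomology C ((DerivedCategory.singleFunctor C 0).obj X) := by
  refine ⟨0, fun i hi => ?_⟩
  have e1 : (DerivedCategory.singleFunctor C 0).obj X ≅
      DerivedCategory.Q.obj ((HomologicalComplex.single C (ComplexShape.up ℤ) 0).obj X) :=
    ((SingleFunctors.evaluation _ _ 0).mapIso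
      (DerivedCategory.singleFunctorsPostcompQIso C)).app X
  refine IsZero.of_iso ?_ ((DerivedCategory.homologyFunctor C i).mapIso e1 ≪≫
    (DerivedCategory.homologyFunctorFactors C i).app _)
  exact HomologicalComplex.isZero_single_obj_homology _ _ X i (by omega)

/-- The functor `C ⥤ D⁺(C)` sending an object to the associated complex concentrated in
degree `0`. -/
noncomputable def singleDPlus : C ⥤ DPlus C :=
  ObjectProperty.lift _ (DerivedCategory.singleFunctor C 0)
    (singleFunctor_mem_isBoundedBelowCohomology C)

open DerivedCategory Pretriangulated in
/-- The lowest cohomology object of a bounded below object maps to it. -/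
lemma exists_single_to_of_isGE {C : Type*} [Category C] [Abelian C] [HasDerivedCategory C]
    (K : DerivedCategory C) (n : ℤ) (hK : K.IsGE n) :
    ∃ (W : C) (α : (singleFunctor C n).obj W ⟶ K), IsIso ((homologyFunctor C n).map α) ∧
      ∀ Y : C, Function.Bijective
        (fun g : (singleFunctor C n).obj Y ⟶ (singleFunctor C n).obj W => g ≫ α) := by
  obtain ⟨X, Z, hX, hZ, f, g, h, hT⟩ := TStructure.t.exists_triangle K n (n + 1) rfl
  have hX' : X.IsLE n := ⟨hX⟩
  have hZ' : Z.IsGE (n + 1) := ⟨hZ⟩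
  have hδ : ∀ i : ℤ, i ≤ n → Mono ((homologyFunctor C i).map f) := fun i hi =>
    (HomologySequence.mono_homologyMap_mor₁_iff _ hT (i - 1) i (by omega)).2
      ((isZero_of_isGE Z (n + 1) (i - 1) (by omega)).eq_of_src _ _)
  have hXge : X.IsGE n := by
    rw [isGE_iff]
    intro i hi
    have := hδ i hi.le
    exact (isZero_of_isGE K n i hi).of_mono ((homologyFunctor C i).map f)
  have hmono := hδ n le_rfl
  have hepi : Epi ((homologyFunctor C n).map f) :=
    (HomologySequence.epi_homologyMap_mor₁_iff _ hT n).2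
      ((isZero_of_isGE Z (n + 1) n (by omega)).eq_of_tgt _ _)
  have hiso : IsIso ((homologyFunctor C n).map f) := isIso_of_mono_of_epi _
  obtain ⟨W, ⟨e⟩⟩ := exists_iso_singleFunctor_obj_of_isGE_of_isLE X n
  refine ⟨W, e.inv ≫ f, ?_, fun Y => ⟨?_, ?_⟩⟩
  · rw [Functor.map_comp]
    infer_instance
  · intro a b hab
    have h0 : ((a - b) ≫ e.inv) ≫ f = 0 := by
      simpa [Preadditive.sub_comp, sub_eq_zero] using hab
    obtain ⟨c, hc⟩ := Triangle.coyoneda_exact₂ _ (inv_rot_of_distTriang _ hT) ((a - b) ≫ e.inv) h0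
    have hZs : TStructure.t.IsGE (Z⟦(-1 : ℤ)⟧) (n + 2) :=
      TStructure.t.isGE_shift Z (n + 1) (-1) (n + 2)
    have hc0 : c = 0 := TStructure.t.zero_of_isLE_of_isGE c n (n + 2) (by omega)
      inferInstance hZs
    rw [hc0, zero_comp] at hc
    rw [← sub_eq_zero, ← cancel_mono e.inv, zero_comp]
    exact hc
  · intro b
    obtain ⟨c, hc⟩ : ∃ c : (singleFunctor C n).obj Y ⟶ X, b = c ≫ f :=
      Triangle.coyoneda_exact₂ _ hT b
        (TStructure.t.zero_of_isLE_of_isGE (b ≫ g) n (n + 1) (by omega) inferInstance hZ')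
    exact ⟨c ≫ e.hom, by simpa using hc.symm⟩

open DerivedCategory in
/-- Taking `Hⁿ` is bijective on morphisms from `Y[-n]` to an object in degrees `≥ n`. -/
lemma bijective_homology_of_isGE {C : Type*} [Category C] [Abelian C] [HasDerivedCategory C]
    (K : DerivedCategory C) (n : ℤ) (hK : K.IsGE n) (Y : C) :
    Function.Bijective (fun g : (singleFunctor C n).obj Y ⟶ K =>
      (singleFunctorCompHomologyFunctorIso C n).inv.app Y ≫ (homologyFunctor C n).map g) := by
  obtain ⟨W, α, hα, hb⟩ := exists_single_to_of_isGE K n hK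
  have key : ∀ φ : Y ⟶ W, (singleFunctorCompHomologyFunctorIso C n).inv.app Y ≫
      (homologyFunctor C n).map ((singleFunctor C n).map φ ≫ α) =
      φ ≫ (singleFunctorCompHomologyFunctorIso C n).inv.app W ≫
        (homologyFunctor C n).map α := by
    intro φ
    have := (singleFunctorCompHomologyFunctorIso C n).inv.naturality φ
    dsimp at this
    rw [Functor.map_comp, ← Category.assoc, ← this, Category.assoc]
  have hI : IsIso ((singleFunctorCompHomologyFunctorIso C n).inv.app W ≫
        (homologyFunctor C n).map α) := inferInstance
  constructor
  · intro a b hab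
    obtain ⟨a, rfl⟩ := (hb Y).2 a
    obtain ⟨b, rfl⟩ := (hb Y).2 b
    obtain ⟨a, rfl⟩ := (singleFunctor C n).map_surjective a
    obtain ⟨b, rfl⟩ := (singleFunctor C n).map_surjective b
    dsimp only at hab
    rw [key, key, cancel_mono] at hab
    rw [hab]
  · intro ψ
    refine ⟨(singleFunctor C n).map (ψ ≫ inv ((singleFunctorCompHomologyFunctorIso C n).inv.app W ≫
        (homologyFunctor C n).map α)) ≫ α, ?_⟩
    dsimp only
    rw [key, Category.assoc, IsIso.inv_hom_id, Category.comp_id]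

open DerivedCategory in
lemma homology_naturality_left {C : Type*} [Category C] [Abelian C] [HasDerivedCategory C]
    {K : DerivedCategory C} {n : ℤ} {Y Y' : C} (f : Y' ⟶ Y)
    (k : (singleFunctor C n).obj Y ⟶ K) :
    (singleFunctorCompHomologyFunctorIso C n).inv.app Y' ≫
      (homologyFunctor C n).map ((singleFunctor C n).map f ≫ k) =
    f ≫ (singleFunctorCompHomologyFunctorIso C n).inv.app Y ≫ (homologyFunctor C n).map k := by
  have := (singleFunctorCompHomologyFunctorIso C n).inv.naturality f
  dsimp at this
  rw [Functor.map_comp, reassoc_of% this]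

/-- A functor induced by `F` on derived categories commutes with the single functors. -/
noncomputable def singleCompIso {A : Type*} {B : Type*} [Category A] [Category B] [Abelian A]
    [Abelian B] [HasDerivedCategory A] [HasDerivedCategory B]
    (F : B ⥤ A) [F.Additive] (G' : DerivedCategory B ⥤ DerivedCategory A)
    (eQ : F.mapHomologicalComplex (ComplexShape.up ℤ) ⋙ DerivedCategory.Q ≅
      DerivedCategory.Q ⋙ G') (n : ℤ) :
    F ⋙ DerivedCategory.singleFunctor A n ≅ DerivedCategory.singleFunctor B n ⋙ G' :=
  Functor.isoWhiskerLeft F (DerivedCategory.singleFunctorIsoCompQ A n) ≪≫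
    (Functor.associator _ _ _).symm ≪≫
    Functor.isoWhiskerRight
      (HomologicalComplex.singleMapHomologicalComplex F (ComplexShape.up ℤ) n).symm _ ≪≫
    Functor.associator _ _ _ ≪≫ Functor.isoWhiskerLeft _ eQ ≪≫
    (Functor.associator _ _ _).symm ≪≫
    Functor.isoWhiskerRight (DerivedCategory.singleFunctorIsoCompQ B n).symm G'

section Main

variable {A : Type*} {B : Type*} [Category A] [Category B] [Abelian A] [Abelian B]
    [HasDerivedCategory A] [HasDerivedCategory B]
    (fplus : B ⥤ A) [fplus.Additive]
    (G' : DerivedCategory B ⥤ DerivedCategory A)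
    (eQ : fplus.mapHomologicalComplex (ComplexShape.up ℤ) ⋙ DerivedCategory.Q ≅
      DerivedCategory.Q ⋙ G')
    (Ft : DPlus B ⥤ DPlus A)
    (eF : Ft ⋙ DPlusIncl A ≅ DPlusIncl B ⋙ G')
    (fpush : DPlus A ⥤ DPlus B)
    (adj : Ft ⊣ fpush)

/-- The same compatibility for the bounded-below derived categories. -/
noncomputable def singleDPlusCompIso :
    fplus ⋙ singleDPlus A ≅ singleDPlus B ⋙ Ft :=
  ((ObjectProperty.fullyFaithfulι (IsBoundedBelowCohomology A)).whiskeringRight B).preimageIso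
    (singleCompIso fplus G' eQ 0 ≪≫ Functor.isoWhiskerLeft (singleDPlus B) eF.symm)

lemma isGE_push {A : Type*} {B : Type*} [Category A] [Category B] [Abelian A] [Abelian B]
    [HasDerivedCategory A] [HasDerivedCategory B]
    (fplus : B ⥤ A) [fplus.Additive]
    (G' : DerivedCategory B ⥤ DerivedCategory A)
    (eQ : fplus.mapHomologicalComplex (ComplexShape.up ℤ) ⋙ DerivedCategory.Q ≅
      DerivedCategory.Q ⋙ G')
    (Ft : DPlus B ⥤ DPlus A)
    (eF : Ft ⋙ DPlusIncl A ≅ DPlusIncl B ⋙ G')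
    (fpush : DPlus A ⥤ DPlus B)
    (adj : Ft ⊣ fpush) (X : A) :
    ((DPlusIncl B).obj (fpush.obj ((singleDPlus A).obj X))).IsGE 0 := by
  set K := fpush.obj ((singleDPlus A).obj X) with hKdef
  have step : ∀ m : ℤ, m < 0 → ((DPlusIncl B).obj K).IsGE m →
      ((DPlusIncl B).obj K).IsGE (m + 1) := by
    intro m hm hK
    have hsub : ∀ Y : B, Subsingleton ((DerivedCategory.singleFunctor B m).obj Y ⟶
        (DPlusIncl B).obj K) := by
      intro Y
      let S : DPlus B := ⟨(DerivedCategory.singleFunctor B m).obj Y,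
        m, (DerivedCategory.isGE_iff _ _).1 inferInstance⟩
      let i : (DerivedCategory.singleFunctor A m).obj (fplus.obj Y) ≅
          (DPlusIncl A).obj (Ft.obj S) :=
        (singleCompIso fplus G' eQ m).app Y ≪≫ (eF.symm.app S)
      have hLE : ((DPlusIncl A).obj (Ft.obj S)).IsLE m :=
        DerivedCategory.TStructure.t.isLE_of_iso i m
      have hz : ∀ g : Ft.obj S ⟶ (singleDPlus A).obj X, (DPlusIncl A).map g = 0 := fun g =>
        DerivedCategory.TStructure.t.zero_of_isLE_of_isGE _ m 0 hm hLE
          (inferInstanceAs (((DerivedCategory.singleFunctor A 0).obj X).IsGE 0))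
      have hs : Subsingleton (Ft.obj S ⟶ (singleDPlus A).obj X) :=
        ⟨fun a b => (DPlusIncl A).map_injective ((hz a).trans (hz b).symm)⟩
      have hs' : Subsingleton (S ⟶ K) := (adj.homEquiv S _).symm.subsingleton
      exact ((ObjectProperty.fullyFaithfulι (IsBoundedBelowCohomology B)).homEquiv
        (X := S) (Y := K)).symm.subsingleton
    rw [DerivedCategory.isGE_iff]
    intro i hi
    rcases (show i < m ∨ i = m by omega) with h | rfl
    · exact DerivedCategory.isZero_of_isGE _ m i h
    · have := hsub ((DerivedCategory.homologyFunctor B i).obj ((DPlusIncl B).obj K))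
      rw [IsZero.iff_id_eq_zero]
      have hb := bijective_homology_of_isGE ((DPlusIncl B).obj K) i hK
        ((DerivedCategory.homologyFunctor B i).obj ((DPlusIncl B).obj K))
      obtain ⟨a, ha⟩ := hb.2 (𝟙 _)
      obtain ⟨b, hb'⟩ := hb.2 0
      rw [Subsingleton.elim a b] at ha
      exact ha.symm.trans hb'
  obtain ⟨n, hn⟩ := K.property
  have hn' : ((DPlusIncl B).obj K).IsGE n := (DerivedCategory.isGE_iff _ _).2 hn
  have all : ∀ k : ℕ, ((DPlusIncl B).obj K).IsGE (min (n + k) 0) := by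
    intro k
    induction k with
    | zero => exact DerivedCategory.TStructure.t.isGE_of_ge _ _ n (by simp)
    | succ k ih =>
      by_cases h : n + k < 0
      · rw [min_eq_left h.le] at ih
        have := step _ h ih
        rwa [min_eq_left (by push_cast; omega), Nat.cast_succ, ← add_assoc]
      · rw [min_eq_right (by omega)] at ih
        rwa [min_eq_right (by push_cast; omega)]
  have := all n.natAbs
  rwa [min_eq_right (by omega)] at this

/-- `f⁺` is left adjoint to `H⁰ ∘ f₊` on the abelian categories. -/
noncomputable def heartAdjunction :
    fplus ⊣ (singleDPlus A ⋙ fpush ⋙ DPlusIncl B ⋙ DerivedCategory.homologyFunctor B 0) :=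
  have : (singleDPlus A).Full := inferInstanceAs (ObjectProperty.lift _ _ _).Full
  have : (singleDPlus A).Faithful := inferInstanceAs (ObjectProperty.lift _ _ _).Faithful
  let ι := singleDPlusCompIso fplus G' eQ Ft eF
  let e1 : ∀ (Y : B) (X : A), (fplus.obj Y ⟶ X) ≃
      ((singleDPlus B).obj Y ⟶ fpush.obj ((singleDPlus A).obj X)) := fun Y X =>
    (Functor.FullyFaithful.ofFullyFaithful (singleDPlus A)).homEquiv.trans
      (((ι.app Y).homFromEquiv).trans (adj.homEquiv _ _))
  let e2 : ∀ (Y : B) (X : A),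
      ((singleDPlus B).obj Y ⟶ fpush.obj ((singleDPlus A).obj X)) ≃
      (Y ⟶ (singleDPlus A ⋙ fpush ⋙ DPlusIncl B ⋙
        DerivedCategory.homologyFunctor B 0).obj X) := fun Y X =>
    (ObjectProperty.fullyFaithfulι (IsBoundedBelowCohomology B)).homEquiv.trans
      (Equiv.ofBijective _ (bijective_homology_of_isGE _ 0
        (isGE_push fplus G' eQ Ft eF fpush adj X) Y))
  Adjunction.mkOfHomEquiv
    { homEquiv := fun Y X => (e1 Y X).trans (e2 Y X)
      homEquiv_naturality_left_symm := by
        intro Y' Y X f g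
        obtain ⟨g, rfl⟩ := ((e1 Y X).trans (e2 Y X)).surjective g
        rw [Equiv.symm_apply_apply, Equiv.symm_apply_eq]
        have h1 : e1 Y' X (fplus.map f ≫ g) = (singleDPlus B).map f ≫ e1 Y X g := by
          have := ι.inv.naturality f
          dsimp at this
          simp only [e1, Equiv.trans_apply, Iso.homFromEquiv_apply, Iso.app_inv,
            Functor.FullyFaithful.homEquiv_apply, Functor.map_comp]
          rw [← Adjunction.homEquiv_naturality_left, reassoc_of% this]
        have h2 : ∀ k, e2 Y' X ((singleDPlus B).map f ≫ k) = f ≫ e2 Y X k := by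
          intro k
          exact homology_naturality_left f _
        exact ((congrArg (e2 Y' X) h1).trans (h2 _)).symm
      homEquiv_naturality_right := by
        intro Y X X' f g
        have h1 : e1 Y X' (f ≫ g) = e1 Y X f ≫ fpush.map ((singleDPlus A).map g) := by
          simp only [e1, Equiv.trans_apply, Iso.homFromEquiv_apply,
            Functor.FullyFaithful.homEquiv_apply, Functor.map_comp]
          rw [← Adjunction.homEquiv_naturality_right, Category.assoc]
        have h2 : ∀ k, e2 Y X' (k ≫ fpush.map ((singleDPlus A).map g)) =
            e2 Y X k ≫ (singleDPlus A ⋙ fpush ⋙ DPlusIncl B ⋙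
              DerivedCategory.homologyFunctor B 0).map g := by
          intro k
          change _ ≫ (DerivedCategory.homologyFunctor B 0).map (k.hom ≫ _) = (_ ≫ _) ≫ _
          rw [Functor.map_comp, Category.assoc]
          rfl
        exact (congrArg (e2 Y X') h1).trans (h2 _) }

end Main

/-- Let `A`, `B` be abelian categories and `f⁺ : B ⥤ A` an additive exact functor; let
`f̃⁺ : D⁺(B) ⥤ D⁺(A)` be the functor it induces on bounded-below derived categories (i.e.
compatible, via the inclusions, with a functor `G' : D(B) ⥤ D(A)` induced by `f⁺` on
complexes).  Suppose given `f₊ : D⁺(A) ⥤ D⁺(B)` together with an adjunction `f̃⁺ ⊣ f₊`.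
Then for every object `X` of `A`, regarded as a complex concentrated in degree `0`:
(i) `Hⁱ(f₊ X) = 0` for all `i < 0`; (ii) there is a bijection
`Hom_A (f⁺ Y) X ≃ Hom_B Y (H⁰ (f₊ X))`, natural in `Y`; (iii) if `f⁺` admits a right
adjoint `f⁎ : A ⥤ B`, then `H⁰ (f₊ X)` is naturally isomorphic to `f⁎ X`. -/
theorem stmt1 {A : Type*} {B : Type*} [Category A] [Category B] [Abelian A] [Abelian B]
    [HasDerivedCategory A] [HasDerivedCategory B]
    (fplus : B ⥤ A) [fplus.Additive]
    [PreservesFiniteLimits fplus] [PreservesFiniteColimits fplus]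
    (G' : DerivedCategory B ⥤ DerivedCategory A)
    (eQ : fplus.mapHomologicalComplex (ComplexShape.up ℤ) ⋙ DerivedCategory.Q ≅
      DerivedCategory.Q ⋙ G')
    (Ft : DPlus B ⥤ DPlus A)
    (eF : Ft ⋙ DPlusIncl A ≅ DPlusIncl B ⋙ G')
    (fpush : DPlus A ⥤ DPlus B)
    (adj : Ft ⊣ fpush) :
    (∀ (X : A) (i : ℤ), i < 0 →
      IsZero ((DerivedCategory.homologyFunctor B i).obj
        ((DPlusIncl B).obj (fpush.obj ((singleDPlus A).obj X))))) ∧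
    (∀ X : A, ∃ e : ∀ Y : B, (fplus.obj Y ⟶ X) ≃
        (Y ⟶ (DerivedCategory.homologyFunctor B 0).obj
          ((DPlusIncl B).obj (fpush.obj ((singleDPlus A).obj X)))),
      ∀ (Y Y' : B) (g : Y' ⟶ Y) (φ : fplus.obj Y ⟶ X),
        e Y' (fplus.map g ≫ φ) = g ≫ e Y φ) ∧
    (∀ fstar : A ⥤ B, (fplus ⊣ fstar) →
      Nonempty ((singleDPlus A ⋙ fpush ⋙ DPlusIncl B ⋙
        DerivedCategory.homologyFunctor B 0) ≅ fstar)) := by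
  refine ⟨fun X i hi => ?_, fun X => ?_, fun fstar h => ?_⟩
  · have := isGE_push fplus G' eQ Ft eF fpush adj X
    exact DerivedCategory.isZero_of_isGE _ 0 i hi
  · exact ⟨fun Y => (heartAdjunction fplus G' eQ Ft eF fpush adj).homEquiv Y X,
      fun Y Y' g φ => Adjunction.homEquiv_naturality_left _ g φ⟩
  · exact ⟨(heartAdjunction fplus G' eQ Ft eF fpush adj).rightAdjointUniq h⟩
end

section
/- Let K be a field and L a finite separable field extension of K. Let μ : L ⊗[K] L → L be the multiplication map (a ⊗ b ↦ ab) and I := ker μ, an ideal of the commutative ring L ⊗[K] L. Let M be a module over L ⊗[K] L and set M₀ := { m ∈ M : a • m = 0 for all a ∈ I } (the I-torsion submodule of M). Then the composite of the inclusion M₀ ⊆ M with the quotient map M → M/(I • M) is bijective; that is, M₀ → M/IM is a canonical isomorphism of (L ⊗[K] L)-modules. -/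
open TensorProduct

/-- Let `K` be a field and `L` a finite separable field extension of `K`.  Let
`μ : L ⊗[K] L → L` be the multiplication map and `I := ker μ`.  For a module `M` over
`L ⊗[K] L`, the composite of the inclusion of the `I`-torsion submodule
`M₀ = {m : M | ∀ a ∈ I, a • m = 0}` into `M` with the quotient map `M → M ⧸ I • M` is
bijective. -/
theorem stmt2 (K L : Type*) [Field K] [Field L] [Algebra K L]
    [FiniteDimensional K L] [Algebra.IsSeparable K L]
    (M : Type*) [AddCommGroup M] [Module (L ⊗[K] L) M] :
    Function.Bijective
      (fun m : {m : M // ∀ a ∈ RingHom.ker (Algebra.TensorProduct.lmul' K (S := L)), a • m = 0} =>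
        ((RingHom.ker (Algebra.TensorProduct.lmul' K (S := L)) •
          (⊤ : Submodule (L ⊗[K] L) M))).mkQ m.1) := by
  have hU : Algebra.FormallyUnramified K L := Algebra.FormallyUnramified.of_isSeparable K L
  obtain ⟨e, he, hI⟩ : ∃ e : L ⊗[K] L, IsIdempotentElem e ∧
      RingHom.ker (Algebra.TensorProduct.lmul' K (S := L)) = Ideal.span {e} := by
    apply (Ideal.isIdempotentElem_iff_of_fg _ (KaehlerDifferential.ideal_fg K L)).mp
    exact (Ideal.cotangent_subsingleton_iff _).mp hU.1
  rw [hI]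
  have heI : e ∈ Ideal.span {e} := Ideal.mem_span_singleton_self e
  have key : ∀ x ∈ (Ideal.span {e} • (⊤ : Submodule (L ⊗[K] L) M)), e • x = x := by
    intro x hx
    rw [Submodule.ideal_span_singleton_smul] at hx
    obtain ⟨y, -, rfl⟩ := (Submodule.mem_smul_pointwise_iff_exists _ _ _).mp hx
    rw [smul_smul, he.eq]
  constructor
  · rintro ⟨m, hm⟩ ⟨n, hn⟩ h
    have h1 := key _ ((Submodule.Quotient.eq _).mp h)
    rw [smul_sub, hm e heI, hn e heI, sub_zero] at h1
    exact Subtype.ext (sub_eq_zero.mp h1.symm)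
  · intro q
    obtain ⟨m, rfl⟩ := Submodule.mkQ_surjective _ q
    refine ⟨⟨m - e • m, ?_⟩, ?_⟩
    · intro a ha
      obtain ⟨b, rfl⟩ := Ideal.mem_span_singleton'.mp ha
      rw [smul_sub, smul_smul, mul_assoc, he.eq, sub_self]
    · refine (Submodule.Quotient.eq _).mpr ?_
      have h2 : m - e • m - m = -(e • m) := by abel
      rw [h2]
      exact neg_mem (Submodule.smul_mem_smul heI trivial)
end

section
/- Let K be a field and L a finite separable field extension of K. Let μ : L ⊗[K] L → L be the multiplication map (a ⊗ b ↦ ab) and I := ker μ. Regard L as an (L ⊗[K] L)-algebra via μ. Let M be a module over L ⊗[K] L and set M₀ := { m ∈ M : a • m = 0 for all a ∈ I }. Then the map M₀ → L ⊗[L ⊗[K] L] M sending m to 1 ⊗ m (the restriction to M₀ of the canonical base-change map M → L ⊗[L ⊗[K] L] M) is bijective; that is, M₀ is canonically isomorphic to the base change L ⊗[L ⊗[K] L] M. -/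
open TensorProduct

theorem stmt3_aux {R A M : Type*} [CommRing R] [CommRing A] [Algebra R A] [AddCommGroup M]
    [Module R M] (hs : Function.Surjective (algebraMap R A)) (e : R) (he : algebraMap R A e = 1)
    (hk : ∀ a : R, algebraMap R A a = 0 → a * e = 0) :
    Function.Bijective (fun m : {m : M // ∀ a : R, algebraMap R A a = 0 → a • m = 0} =>
      ((1 : A) ⊗ₜ[R] (m.1 : M) : A ⊗[R] M)) := by
  choose s hs using hs
  have key : ∀ x y : R, algebraMap R A x = algebraMap R A y → x * e = y * e := by
    intro x y h
    have := hk (x - y) (by rw [map_sub, h, sub_self])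
    rwa [sub_mul, sub_eq_zero] at this
  let f : A →ₗ[R] R :=
    { toFun := fun a => s a * e
      map_add' := by
        intro x y
        rw [← add_mul]
        apply key
        simp [hs]
      map_smul' := by
        intro r x
        simp only [RingHom.id_apply, smul_eq_mul]
        rw [← mul_assoc]
        apply key
        simp [hs, Algebra.smul_def] }
  constructor
  · have h1 : ∀ m : {m : M // ∀ a : R, algebraMap R A a = 0 → a • m = 0},
        TensorProduct.lid R M (LinearMap.rTensor M f ((1 : A) ⊗ₜ[R] m.1)) = m.1 := by
      intro m
      have := m.2 (s 1 * e - 1) (by simp [hs, he])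
      rw [sub_smul, one_smul, sub_eq_zero] at this
      simpa [f] using this
    intro m n h
    apply Subtype.ext
    rw [← h1 m, ← h1 n]
    exact congrArg (fun t => TensorProduct.lid R M (LinearMap.rTensor M f t)) h
  · intro t
    induction t using TensorProduct.induction_on with
    | zero => exact ⟨⟨0, by simp⟩, by simp⟩
    | tmul a m =>
      refine ⟨⟨(s a * e) • m, ?_⟩, ?_⟩
      · intro b hb
        rw [smul_smul, mul_left_comm, hk b hb, mul_zero, zero_smul]
      · simp only
        rw [← TensorProduct.smul_tmul, Algebra.smul_def, map_mul, hs, he, mul_one, mul_one]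
    | add x y hx hy =>
      obtain ⟨m, hm⟩ := hx
      obtain ⟨n, hn⟩ := hy
      refine ⟨⟨m.1 + n.1, ?_⟩, ?_⟩
      · intro b hb
        rw [smul_add, m.2 b hb, n.2 b hb, add_zero]
      · simp only at hm hn ⊢
        rw [TensorProduct.tmul_add, hm, hn]

/-- Let `K` be a field and `L` a finite separable field extension of `K`.  Let
`μ : L ⊗[K] L → L` be the multiplication map and `I := ker μ`; regard `L` as an
`(L ⊗[K] L)`-algebra via `μ`.  For a module `M` over `L ⊗[K] L`, the restriction to the
`I`-torsion submodule `M₀ = {m : M | ∀ a ∈ I, a • m = 0}` of the canonical base-change map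
`M → L ⊗[L ⊗[K] L] M`, `m ↦ 1 ⊗ m`, is bijective. -/
theorem stmt3 (K L : Type*) [Field K] [Field L] [Algebra K L]
    [FiniteDimensional K L] [Algebra.IsSeparable K L]
    (M : Type*) [AddCommGroup M] [Module (L ⊗[K] L) M] :
    letI : Algebra (L ⊗[K] L) L := (Algebra.TensorProduct.lmul' K (S := L)).toRingHom.toAlgebra
    Function.Bijective
      (fun m : {m : M // ∀ a ∈ RingHom.ker (Algebra.TensorProduct.lmul' K (S := L)), a • m = 0} =>
        ((1 : L) ⊗ₜ[L ⊗[K] L] (m.1 : M) : L ⊗[L ⊗[K] L] M)) := by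
  letI : Algebra (L ⊗[K] L) L := (Algebra.TensorProduct.lmul' K (S := L)).toRingHom.toAlgebra
  have hu : Algebra.FormallyUnramified K L := Algebra.FormallyUnramified.of_isSeparable K L
  have hf : Algebra.EssFiniteType K L := inferInstance
  have h := @stmt3_aux (L ⊗[K] L) L M _ _ this _ _
    (fun x => ⟨x ⊗ₜ 1, by
      change Algebra.TensorProduct.lmul' K (S := L) (x ⊗ₜ 1) = x
      simp⟩)
    (Algebra.FormallyUnramified.elem K L) Algebra.FormallyUnramified.lmul_elem ?_
  · exact h
  · intro a ha
    have h2 : ∀ a : L ⊗[K] L, a * Algebra.FormallyUnramified.elem K L =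
        (Algebra.TensorProduct.lmul' K (S := L) a ⊗ₜ 1) * Algebra.FormallyUnramified.elem K L := by
      intro a
      induction a using TensorProduct.induction_on with
      | zero => simp
      | add x y hx hy => rw [add_mul, hx, hy, map_add, TensorProduct.add_tmul, add_mul]
      | tmul x y =>
        have h3 : x ⊗ₜ[K] y = (x ⊗ₜ 1) * (1 ⊗ₜ y) := by simp
        rw [h3, mul_assoc, Algebra.FormallyUnramified.one_tmul_mul_elem, ← mul_assoc]
        simp
    have ha' : Algebra.TensorProduct.lmul' K (S := L) a = 0 := ha
    rw [h2, ha', TensorProduct.zero_tmul, zero_mul]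
end

section
/- Let K be a field and L a finite separable field extension of K. Then every module over the commutative ring L ⊗[K] L is flat. -/
open TensorProduct

/-- Let `K` be a field and `L` a finite separable field extension of `K`.  Then every module
over the commutative ring `L ⊗[K] L` is flat. -/
theorem stmt4 (K L : Type*) [Field K] [Field L] [Algebra K L]
    [FiniteDimensional K L] [Algebra.IsSeparable K L]
    (M : Type*) [AddCommGroup M] [Module (L ⊗[K] L) M] :
    Module.Flat (L ⊗[K] L) M := by
  have : Algebra.FormallyUnramified K L := Algebra.FormallyUnramified.of_isSeparable K L
  have : IsReduced (L ⊗[K] L) := Algebra.FormallyUnramified.isReduced_of_field L _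
  have : IsArtinianRing (L ⊗[K] L) := IsArtinianRing.of_finite L _
  have : IsSemisimpleRing (L ⊗[K] L) := IsArtinianRing.isSemisimpleRing_of_isReduced _
  have : Module.Projective (L ⊗[K] L) M := Module.projective_of_isSemisimpleRing _ _
  infer_instance
end

section
/- Let K be a field, L a finite separable field extension of K, and Ω an algebraically closed field equipped with a K-algebra structure (for instance an algebraic closure of K). Let V be a finite-dimensional L-vector space and φ : V → V an L-linear endomorphism; write f ∈ L[X] for the characteristic polynomial of φ as an L-linear endomorphism, and g ∈ K[X] for the characteristic polynomial of φ regarded, by restriction of scalars, as a K-linear endomorphism of V (which is finite-dimensional over K). Then the image of g in Ω[X] under the structure map K → Ω equals the product, over all K-algebra homomorphisms σ : L → Ω, of the polynomials obtained by applying σ to the coefficients of f. Consequently, the set of roots of g in Ω (the eigenvalues of the K-linear endomorphism) equals the union, over all K-algebra homomorphisms σ : L → Ω, of the sets of roots in Ω of the polynomial f with coefficients mapped by σ. -/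
open Polynomial

open Matrix in
lemma aux_polyToMatrix_C {A R n : Type*} [CommRing A] [CommRing R] [Fintype n] [DecidableEq n]
    (f : A →+* Matrix n n R) (a : A) : f.polyToMatrix (C a) = (f a).map C := by
  simp [RingHom.polyToMatrix, -AlgEquiv.symm_toRingEquiv]

open Matrix in
lemma aux_polyToMatrix_X {A R n : Type*} [CommRing A] [CommRing R] [Fintype n] [DecidableEq n]
    (f : A →+* Matrix n n R) : f.polyToMatrix X = diagonal fun _ => X := by
  simp [RingHom.polyToMatrix, -AlgEquiv.symm_toRingEquiv]

open Matrix in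
lemma aux_conj {K L Ω n : Type*} [Field K] [Field L] [Algebra K L] [Field Ω] [Algebra K Ω]
    [Fintype n] [DecidableEq n] (b : Module.Basis n K L) (e : n → (L →ₐ[K] Ω)) (p : L[X]) :
    (Matrix.of fun i j => C (e i (b j)) : Matrix n n (Polynomial Ω)) *
      (mapRingHom (algebraMap K Ω)).mapMatrix
        ((Algebra.leftMulMatrix b : L →+* Matrix n n K).polyToMatrix p) =
    diagonal (fun i => p.map (e i : L →+* Ω)) * (Matrix.of fun i j => C (e i (b j))) := by
  induction p using Polynomial.induction_on with
  | C a =>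
    rw [aux_polyToMatrix_C]
    ext1 i j
    rw [Matrix.diagonal_mul, Matrix.mul_apply]
    have h : e i (a * b j) = ∑ k, e i (b k) * algebraMap K Ω (Algebra.leftMulMatrix b a k j) := by
      conv_lhs => rw [← b.sum_repr (a * b j)]
      simp [Algebra.leftMulMatrix_eq_repr_mul, Algebra.smul_def, mul_comm]
    simp only [of_apply, RingHom.mapMatrix_apply, Matrix.map_apply, coe_mapRingHom, map_C,
      RingHom.coe_coe, ← C_mul, ← map_sum]
    rw [← map_mul, h]
  | add p q hp hq =>
    simp only [map_add, mul_add, hp, hq, Polynomial.map_add, ← add_mul, diagonal_add]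
  | monomial k a h =>
    rw [pow_succ, ← mul_assoc, map_mul, map_mul, ← mul_assoc, h, aux_polyToMatrix_X]
    ext1 i j
    simp
    ring

open Matrix in
lemma aux_charpoly {K L m n : Type*} [Field K] [Field L]
    [Fintype n] [DecidableEq n] [Fintype m] [DecidableEq m]
    (f : L →+* Matrix n n K) (M : Matrix m m L) :
    ((M.map f).comp m m n n K).charpoly = (f.polyToMatrix M.charpoly).det := by
  rw [Matrix.charpoly, Matrix.charpoly, Matrix.det_det]
  congr 1
  ext1 ⟨i, k⟩ ⟨j, l⟩
  by_cases hij : i = j <;> by_cases hkl : k = l <;>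
    simp [charmatrix_apply, Matrix.comp_apply, hij, hkl, aux_polyToMatrix_C, aux_polyToMatrix_X,
      diagonal_apply]

lemma aux_main (K L Ω : Type*) [Field K] [Field L] [Algebra K L]
    [FiniteDimensional K L] [Algebra.IsSeparable K L]
    [Field Ω] [IsAlgClosed Ω] [Algebra K Ω]
    (V : Type*) [AddCommGroup V] [Module K V] [Module L V] [IsScalarTower K L V]
    [FiniteDimensional L V] [Module.Finite K V] (φ : V →ₗ[L] V) :
    (LinearMap.restrictScalars K φ).charpoly.map (algebraMap K Ω) =
      ∏ σ : L →ₐ[K] Ω, φ.charpoly.map (σ : L →+* Ω) := by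
  classical
  let b := Module.finBasis K L
  let c := Module.finBasis L V
  let e : Fin (Module.finrank K L) ≃ (L →ₐ[K] Ω) :=
    (Fintype.equivFinOfCardEq (AlgHom.card K L Ω)).symm
  rw [← LinearMap.charpoly_toMatrix _ (b.smulTower' c), LinearMap.restrictScalars_toMatrix]
  have h1 := aux_charpoly (Algebra.leftMulMatrix b).toRingHom (φ.toMatrix c c)
  rw [LinearMap.charpoly_toMatrix] at h1
  change (((φ.toMatrix c c).map (Algebra.leftMulMatrix b)).comp _ _ _ _ K).charpoly = _ at h1
  rw [h1, ← coe_mapRingHom, RingHom.map_det]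
  have h2 := congrArg Matrix.det (aux_conj b e φ.charpoly)
  rw [Matrix.det_mul, Matrix.det_mul, mul_comm, Matrix.det_diagonal] at h2
  have h3 : (Matrix.of fun i j => C (e i (b j)) : Matrix _ _ (Polynomial Ω)).det ≠ 0 := by
    have h4 := Algebra.discr_eq_det_embeddingsMatrixReindex_pow_two K Ω b e
    have h5 : (Matrix.of fun i j => C (e i (b j)) : Matrix _ _ (Polynomial Ω)) =
      C.mapMatrix (Algebra.embeddingsMatrixReindex K Ω b e).transpose := by
      ext1 i j
      simp [Algebra.embeddingsMatrixReindex, Algebra.embeddingsMatrix]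
    rw [h5, ← RingHom.map_det, Matrix.det_transpose]
    intro h
    rw [C_eq_zero.mp h] at h4
    exact Algebra.discr_not_zero_of_basis K b (by simpa using h4)
  refine (mul_right_cancel₀ h3 h2).trans ?_
  exact e.prod_comp (fun σ : L →ₐ[K] Ω => φ.charpoly.map (σ : L →+* Ω))

/-- Let `K` be a field, `L` a finite separable field extension of `K`, and `Ω` an
algebraically closed field with a `K`-algebra structure.  Let `V` be a finite-dimensional
`L`-vector space and `φ : V → V` an `L`-linear endomorphism, with characteristic polynomial
`f ∈ L[X]`; let `g ∈ K[X]` be the characteristic polynomial of `φ` regarded as a `K`-linear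
endomorphism of `V`.  Then the image of `g` in `Ω[X]` equals the product, over all
`K`-algebra homomorphisms `σ : L → Ω`, of the polynomials `σ(f)`, and consequently the set
of roots of `g` in `Ω` is the union over all `σ` of the sets of roots of `σ(f)`. -/
theorem stmt5 (K L Ω : Type*) [Field K] [Field L] [Algebra K L]
    [FiniteDimensional K L] [Algebra.IsSeparable K L]
    [Field Ω] [IsAlgClosed Ω] [Algebra K Ω]
    (V : Type*) [AddCommGroup V] [Module K V] [Module L V] [IsScalarTower K L V]
    [FiniteDimensional L V] (φ : V →ₗ[L] V) :
    haveI : Module.Finite K V := Module.Finite.trans L V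
    ((LinearMap.restrictScalars K φ).charpoly.map (algebraMap K Ω) =
      ∏ σ : L →ₐ[K] Ω, φ.charpoly.map (σ : L →+* Ω)) ∧
    {x : Ω | ((LinearMap.restrictScalars K φ).charpoly.map (algebraMap K Ω)).IsRoot x} =
      ⋃ σ : L →ₐ[K] Ω, {x : Ω | (φ.charpoly.map (σ : L →+* Ω)).IsRoot x} := by
  haveI : Module.Finite K V := Module.Finite.trans L V
  have h := aux_main K L Ω V φ
  refine ⟨h, ?_⟩
  rw [h]
  ext x
  simp [Polynomial.IsRoot, Polynomial.eval_prod, Finset.prod_eq_zero_iff]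
end

section
/- Let A be a Grothendieck abelian category and F : A ⥤ A an additive equivalence of categories, and let F-A and for_F : F-A → A be as follows: F-A is the category of pairs (X, Φ) with X an object of A and Φ : X ≅ F(X) an isomorphism, morphisms being morphisms in A compatible with the Φ's, and for_F the forgetful functor. Define (−)_F : A → F-A by sending X to the pair consisting of the coproduct ⊕_{n ∈ ℤ} Fⁿ(X) together with the canonical shift isomorphism ⊕_{n ∈ ℤ} Fⁿ(X) ≅ F(⊕_{n ∈ ℤ} Fⁿ(X)) obtained from the identifications F(Fⁿ(X)) ≅ F^{n+1}(X) (using that the equivalence F preserves coproducts). Then: (i) ((−)_F, for_F) is an adjoint pair; (ii) (−)_F is exact, and consequently for_F sends injective objects of F-A to injective objects of A; (iii) small filtered colimits exist in F-A and commute with for_F; (iv) if G is a generator (separator) of A then G_F is a generator of F-A; (v) F-A is a Grothendieck abelian category. -/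
open CategoryTheory CategoryTheory.Limits

universe v u

/-- Given an endofunctor `F : A ⥤ A`, the objects of the category `F-A`: pairs `(X, Φ)`
where `X` is an object of `A` and `Φ : X ≅ F(X)` is an isomorphism. -/
structure FCat {A : Type u} [Category.{v} A] (F : A ⥤ A) where
  /-- the underlying object of `A` -/
  pt : A
  /-- the structural isomorphism `Φ : X ≅ F(X)` -/
  iso : pt ≅ F.obj pt

namespace FCat

variable {A : Type u} [Category.{v} A] (F : A ⥤ A)

/-- `F-A` is a category: a morphism `(X, Φ) → (Y, Ψ)` is a morphism `f : X → Y` of `A`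
satisfying `F(f) ∘ Φ = Ψ ∘ f`. -/
instance : Category (FCat F) where
  Hom X Y := {f : X.pt ⟶ Y.pt // X.iso.hom ≫ F.map f = f ≫ Y.iso.hom}
  id X := ⟨𝟙 X.pt, by simp⟩
  comp {X Y Z} f g := ⟨f.1 ≫ g.1, by
    rw [F.map_comp, ← Category.assoc, f.2, Category.assoc, g.2, ← Category.assoc]⟩
  id_comp f := Subtype.ext (Category.id_comp f.1)
  comp_id f := Subtype.ext (Category.comp_id f.1)
  assoc f g h := Subtype.ext (Category.assoc f.1 g.1 h.1)

/-- The forgetful functor `for_F : F-A ⥤ A`, `(X, Φ) ↦ X`. -/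
def forgetF : FCat F ⥤ A where
  obj X := X.pt
  map f := f.1

end FCat

/-- The `n`-th iterate (`n : ℕ`) of an endofunctor. -/
def npow {A : Type u} [Category.{v} A] (F : A ⥤ A) : ℕ → (A ⥤ A)
  | 0 => 𝟭 A
  | n + 1 => npow F n ⋙ F

/-- The `n`-th iterate (`n : ℤ`) of a self-equivalence: for `n ≥ 0` the `n`-th iterate of
`F`, and for `n < 0` the `(-n)`-th iterate of a (chosen) quasi-inverse of `F`. -/
noncomputable def zpow {A : Type u} [Category.{v} A] (F : A ⥤ A) [F.IsEquivalence] :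
    ℤ → (A ⥤ A)
  | Int.ofNat n => npow F n
  | Int.negSucc n => npow F.inv (n + 1)

namespace FCat

variable {A : Type u} [Category.{v} A] {F : A ⥤ A}

@[simp] lemma comp_val {X Y Z : FCat F} (f : X ⟶ Y) (g : Y ⟶ Z) : (f ≫ g).1 = f.1 ≫ g.1 := rfl
@[simp] lemma id_val (X : FCat F) : (𝟙 X : X ⟶ X).1 = 𝟙 X.pt := rfl
@[simp] lemma forgetF_obj (X : FCat F) : (forgetF F).obj X = X.pt := rfl
@[simp] lemma forgetF_map {X Y : FCat F} (f : X ⟶ Y) : (forgetF F).map f = f.1 := rfl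

lemma hom_ext {X Y : FCat F} {f g : X ⟶ Y} (h : f.1 = g.1) : f = g := Subtype.ext h

lemma hom_w {X Y : FCat F} (f : X ⟶ Y) : X.iso.hom ≫ F.map f.1 = f.1 ≫ Y.iso.hom := f.2

lemma hom_w_inv {X Y : FCat F} (f : X ⟶ Y) : X.iso.inv ≫ f.1 = F.map f.1 ≫ Y.iso.inv := by
  rw [Iso.inv_comp_eq, ← Category.assoc, Iso.eq_comp_inv, hom_w]

instance : (forgetF F).Faithful := ⟨fun h => hom_ext h⟩

instance : (forgetF F).ReflectsIsomorphisms where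
  reflects {X Y} f hf := by
    change IsIso f.1 at hf
    refine ⟨⟨⟨inv f.1, ?_⟩, hom_ext (by simp), hom_ext (by simp)⟩⟩
    rw [← cancel_epi f.1, ← Category.assoc, ← hom_w, Category.assoc, ← F.map_comp]
    simp

lemma auxL {P Q R : A} {a : P ⟶ F.obj P} {l : P ⟶ Q} {b : Q ⟶ F.obj Q} {p : Q ⟶ R}
    {r : R ⟶ F.obj R} {s : P ⟶ R} (h1 : l ≫ p = s) (h2 : b ≫ F.map p = p ≫ r)
    (h3 : a ≫ F.map s = s ≫ r) : (a ≫ F.map l) ≫ F.map p = (l ≫ b) ≫ F.map p := by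
  rw [Category.assoc, Category.assoc, h2, ← F.map_comp, h1, h3, ← h1, Category.assoc]

lemma auxR {P Q R : A} {a : P ⟶ F.obj P} {i : P ⟶ Q} {b : Q ⟶ F.obj Q} {l : Q ⟶ R}
    {r : R ⟶ F.obj R} {s : P ⟶ R} (h1 : i ≫ l = s) (h2 : a ≫ F.map i = i ≫ b)
    (h3 : a ≫ F.map s = s ≫ r) : i ≫ b ≫ F.map l = i ≫ l ≫ r := by
  rw [← Category.assoc, ← h2, Category.assoc, ← F.map_comp, h1, h3, ← h1, Category.assoc]

section limits
universe w w'
variable {J : Type w} [Category.{w'} J]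

/-- the comparison transformation for a diagram -/
def diagIso (K : J ⥤ FCat F) : K ⋙ forgetF F ≅ (K ⋙ forgetF F) ⋙ F :=
  NatIso.ofComponents (fun j => (K.obj j).iso) (fun f => ((K.map f).2).symm)

@[simp] lemma diagIso_hom_app (K : J ⥤ FCat F) (j : J) :
  (diagIso K).hom.app j = (K.obj j).iso.hom := rfl
@[simp] lemma diagIso_inv_app (K : J ⥤ FCat F) (j : J) :
  (diagIso K).inv.app j = (K.obj j).iso.inv := rfl

section
variable (K : J ⥤ FCat F) {c : Cone (K ⋙ forgetF F)} (t : IsLimit c) [PreservesLimit (K ⋙ forgetF F) F]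

/-- lifted point -/
noncomputable def limPt : FCat F where
  pt := c.pt
  iso := IsLimit.conePointsIsoOfNatIso t (isLimitOfPreserves F t) (diagIso K)

lemma limPt_iso (j : J) : (limPt K t).iso.hom ≫ F.map (c.π.app j) = c.π.app j ≫ (K.obj j).iso.hom :=
  IsLimit.conePointsIsoOfNatIso_hom_comp t (isLimitOfPreserves F t) (diagIso K) j

/-- lifted cone -/
noncomputable def limCone : Cone K where
  pt := limPt K t
  π := { app := fun j => ⟨c.π.app j, limPt_iso K t j⟩
         naturality := fun _ _ f => hom_ext (c.π.naturality f) }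

/-- lifted cone is limit -/
noncomputable def limConeIsLimit : IsLimit (limCone K t) where
  lift s := ⟨t.lift ((forgetF F).mapCone s), by
    refine (isLimitOfPreserves F t).hom_ext fun j => ?_
    exact auxL (t.fac ((forgetF F).mapCone s) j) (limPt_iso K t j) (hom_w (s.π.app j))⟩
  fac s j := hom_ext (t.fac ((forgetF F).mapCone s) j)
  uniq s m h := hom_ext (t.uniq ((forgetF F).mapCone s) m.1 (fun j => congrArg Subtype.val (h j)))

end

noncomputable instance [PreservesLimitsOfShape J F] : CreatesLimitsOfShape J (forgetF F) where
  CreatesLimit {K} := createsLimitOfReflectsIso fun _ t =>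
    { liftedCone := limCone K t
      validLift := Cone.ext (Iso.refl _) (fun _ => (Category.id_comp _).symm)
      makesLimit := limConeIsLimit K t }

section
variable (K : J ⥤ FCat F) {c : Cocone (K ⋙ forgetF F)} (t : IsColimit c)
  [PreservesColimit (K ⋙ forgetF F) F]

/-- lifted point -/
noncomputable def colimPt : FCat F where
  pt := c.pt
  iso := IsColimit.coconePointsIsoOfNatIso t (isColimitOfPreserves F t) (diagIso K)

lemma colimPt_iso (j : J) :
    (K.obj j).iso.hom ≫ F.map (c.ι.app j) = c.ι.app j ≫ (colimPt K t).iso.hom :=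
  (IsColimit.comp_coconePointsIsoOfNatIso_hom t (isColimitOfPreserves F t) (diagIso K) j).symm

/-- lifted cocone -/
noncomputable def colimCocone : Cocone K where
  pt := colimPt K t
  ι := { app := fun j => ⟨c.ι.app j, colimPt_iso K t j⟩
         naturality := fun _ _ f => hom_ext (c.ι.naturality f) }

/-- lifted cocone is colimit -/
noncomputable def colimCoconeIsColimit : IsColimit (colimCocone K t) where
  desc s := ⟨t.desc ((forgetF F).mapCocone s), by
    refine t.hom_ext fun j => ?_
    exact auxR (t.fac ((forgetF F).mapCocone s) j) (colimPt_iso K t j) (hom_w (s.ι.app j))⟩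
  fac s j := hom_ext (t.fac ((forgetF F).mapCocone s) j)
  uniq s m h := hom_ext (t.uniq ((forgetF F).mapCocone s) m.1
    (fun j => congrArg Subtype.val (h j)))

end

noncomputable instance [PreservesColimitsOfShape J F] : CreatesColimitsOfShape J (forgetF F) where
  CreatesColimit {K} := createsColimitOfReflectsIso fun _ t =>
    { liftedCocone := colimCocone K t
      validLift := Cocone.ext (Iso.refl _) (fun _ => Category.comp_id _)
      makesColimit := colimCoconeIsColimit K t }

lemma hasLim [HasLimitsOfShape J A] [F.IsEquivalence] : HasLimitsOfShape J (FCat F) :=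
  hasLimitsOfShape_of_hasLimitsOfShape_createsLimitsOfShape (forgetF F)

lemma hasColim [HasColimitsOfShape J A] [F.IsEquivalence] : HasColimitsOfShape J (FCat F) :=
  hasColimitsOfShape_of_hasColimitsOfShape_createsColimitsOfShape (forgetF F)

end limits

section preadd
variable [Preadditive A] [F.Additive]

instance (X Y : FCat F) : Add (X ⟶ Y) := ⟨fun f g => ⟨f.1 + g.1, by
  rw [F.map_add, Preadditive.comp_add, Preadditive.add_comp, f.2, g.2]⟩⟩
instance (X Y : FCat F) : Zero (X ⟶ Y) := ⟨⟨0, by simp⟩⟩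
instance (X Y : FCat F) : Neg (X ⟶ Y) := ⟨fun f => ⟨-f.1, by
  rw [F.map_neg, Preadditive.comp_neg, Preadditive.neg_comp, f.2]⟩⟩
instance (X Y : FCat F) : Sub (X ⟶ Y) := ⟨fun f g => ⟨f.1 - g.1, by
  rw [F.map_sub, Preadditive.comp_sub, Preadditive.sub_comp, f.2, g.2]⟩⟩
instance (X Y : FCat F) : SMul ℕ (X ⟶ Y) := ⟨fun n f => ⟨n • f.1, by
  rw [F.map_nsmul, Preadditive.comp_nsmul, Preadditive.nsmul_comp, f.2]⟩⟩
instance (X Y : FCat F) : SMul ℤ (X ⟶ Y) := ⟨fun n f => ⟨n • f.1, by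
  rw [F.map_zsmul, Preadditive.comp_zsmul, Preadditive.zsmul_comp, f.2]⟩⟩

instance (X Y : FCat F) : AddCommGroup (X ⟶ Y) :=
  Function.Injective.addCommGroup (fun f : X ⟶ Y => f.1) Subtype.val_injective rfl
    (fun _ _ => rfl) (fun _ => rfl) (fun _ _ => rfl) (fun _ _ => rfl) (fun _ _ => rfl)

instance : Preadditive (FCat F) where
  homGroup _ _ := inferInstance
  add_comp _ _ _ _ _ _ := hom_ext (Preadditive.add_comp _ _ _ _ _ _)
  comp_add _ _ _ _ _ _ := hom_ext (Preadditive.comp_add _ _ _ _ _ _)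

@[simp] lemma zero_val (X Y : FCat F) : (0 : X ⟶ Y).1 = 0 := rfl
instance : (forgetF F).Additive := ⟨rfl⟩
end preadd

section ab
variable [Abelian A] [F.Additive] [F.IsEquivalence]

lemma hasFinLim : HasFiniteLimits (FCat F) := ⟨fun _ _ _ => hasLim⟩
lemma hasFinColim : HasFiniteColimits (FCat F) := ⟨fun _ _ _ => hasColim⟩
instance : PreservesFiniteLimits (forgetF F) := ⟨fun _ _ _ => inferInstance⟩
instance : PreservesFiniteColimits (forgetF F) := ⟨fun _ _ _ => inferInstance⟩
instance : ReflectsFiniteLimits (forgetF F) := ⟨fun _ _ _ => inferInstance⟩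

lemma normalMono {X Y : FCat F} (f : X ⟶ Y) [Mono f] : Nonempty (NormalMono f) := by
  have := hasFinColim (F := F)
  have hm : Mono f.1 := inferInstanceAs (Mono ((forgetF F).map f))
  have hc := isColimitOfHasCokernelOfPreservesColimit (forgetF F) f
  have hk := Abelian.monoIsKernelOfCokernel _ hc (f := f.1)
  have lift : ∀ {W : FCat F} (k : W ⟶ Y) (hk0 : k ≫ cokernel.π f = 0), ∃ l : W ⟶ X, l ≫ f = k := by
    intro W k hk0
    have h0 : k.1 ≫ (cokernel.π f).1 = 0 := congrArg Subtype.val hk0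
    obtain ⟨l, hl⟩ := KernelFork.IsLimit.lift' hk k.1 h0
    change l ≫ f.1 = k.1 at hl
    refine ⟨⟨l, ?_⟩, hom_ext hl⟩
    rw [← cancel_mono (F.map f.1), Category.assoc, Category.assoc, ← F.map_comp, hl, hom_w, hom_w,
      ← Category.assoc, hl]
  exact ⟨⟨_, cokernel.π f, cokernel.condition f, KernelFork.IsLimit.ofι _ _
    (fun k hk => (lift k hk).choose) (fun k hk => (lift k hk).choose_spec)
    (fun k hk m hm => by rw [← cancel_mono f, hm, (lift k hk).choose_spec])⟩⟩

lemma normalEpi {X Y : FCat F} (f : X ⟶ Y) [Epi f] : Nonempty (NormalEpi f) := by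
  have := hasFinLim (F := F)
  have hm : Epi f.1 := inferInstanceAs (Epi ((forgetF F).map f))
  have hc := isLimitOfHasKernelOfPreservesLimit (forgetF F) f
  have hk := Abelian.epiIsCokernelOfKernel _ hc (f := f.1)
  have desc : ∀ {W : FCat F} (k : X ⟶ W) (hk0 : kernel.ι f ≫ k = 0), ∃ l : Y ⟶ W, f ≫ l = k := by
    intro W k hk0
    have h0 : (kernel.ι f).1 ≫ k.1 = 0 := congrArg Subtype.val hk0
    obtain ⟨l, hl⟩ := CokernelCofork.IsColimit.desc' hk k.1 h0
    change f.1 ≫ l = k.1 at hl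
    refine ⟨⟨l, ?_⟩, hom_ext hl⟩
    rw [← cancel_epi f.1, ← Category.assoc, ← hom_w, Category.assoc, ← F.map_comp, hl, hom_w,
      ← Category.assoc, hl]
  exact ⟨⟨_, kernel.ι f, kernel.condition f, CokernelCofork.IsColimit.ofπ _ _
    (fun k hk => (desc k hk).choose) (fun k hk => (desc k hk).choose_spec)
    (fun k hk m hm => by rw [← cancel_epi f, hm, (desc k hk).choose_spec])⟩⟩

/-- `F-A` is abelian -/
@[reducible] noncomputable def abelianFCat : Abelian (FCat F) :=
  have := hasFinLim (F := F)
  have := hasFinColim (F := F)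
  { toPreadditive := inferInstance
    normalMonoOfMono := normalMono
    normalEpiOfEpi := normalEpi
    has_kernels := inferInstance
    has_cokernels := inferInstance
    has_finite_products := inferInstance }

end ab

end FCat

namespace FCat

variable {A : Type u} [Category.{v} A] (F : A ⥤ A) [F.IsEquivalence]

/-- shift -/
noncomputable def shiftIso : ∀ n : ℤ, zpow F n ⋙ F ≅ zpow F (n + 1)
  | Int.ofNat n => (Iso.refl (npow F (n + 1)) : npow F n ⋙ F ≅ npow F (n + 1))
  | Int.negSucc 0 => (Functor.isoWhiskerLeft (𝟭 A) F.asEquivalence.counitIso :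
      𝟭 A ⋙ F.inv ⋙ F ≅ 𝟭 A ⋙ 𝟭 A)
  | Int.negSucc (k + 1) => (Functor.isoWhiskerLeft (npow F.inv (k + 1)) F.asEquivalence.counitIso :
      npow F.inv (k + 1) ⋙ F.inv ⋙ F ≅ npow F.inv (k + 1) ⋙ 𝟭 A)

instance npow_isEquivalence (G : A ⥤ A) [G.IsEquivalence] : ∀ n, (npow G n).IsEquivalence
  | 0 => inferInstanceAs (𝟭 A).IsEquivalence
  | n + 1 => by
    have := npow_isEquivalence G n
    exact inferInstanceAs (npow G n ⋙ G).IsEquivalence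

instance zpow_isEquivalence : ∀ n, (zpow F n).IsEquivalence
  | Int.ofNat n => npow_isEquivalence F n
  | Int.negSucc n => npow_isEquivalence F.inv (n + 1)

variable [HasCoproducts.{0} A]

/-- the iso -/
noncomputable def LamIso (X : A) : F.obj (∐ fun n : ℤ => (zpow F n).obj X) ≅
    ∐ fun n : ℤ => (zpow F n).obj X :=
  PreservesCoproduct.iso F _ ≪≫
    Sigma.whiskerEquiv (Equiv.addRight (1 : ℤ)) (fun n => ((shiftIso F n).app X).symm)

lemma ι_LamIso (X : A) (n : ℤ) : F.map (Sigma.ι (fun n : ℤ => (zpow F n).obj X) n) ≫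
    (LamIso F X).hom = (shiftIso F n).hom.app X ≫ Sigma.ι (fun n : ℤ => (zpow F n).obj X) (n + 1) := by
  have h : F.map (Sigma.ι (fun n : ℤ => (zpow F n).obj X) n) ≫
      (PreservesCoproduct.iso F fun n : ℤ => (zpow F n).obj X).hom =
      Sigma.ι (fun n : ℤ => F.obj ((zpow F n).obj X)) n := by
    rw [← Iso.eq_comp_inv, PreservesCoproduct.inv_hom, ι_comp_sigmaComparison]
  rw [LamIso, Iso.trans_hom, ← Category.assoc, h]
  simp [Sigma.whiskerEquiv]

/-- object -/
noncomputable def LamObj (X : A) : FCat F := ⟨_, (LamIso F X).symm⟩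

/-- inclusion -/
noncomputable def inc (X : A) (n : ℤ) : (zpow F n).obj X ⟶ (LamObj F X).pt :=
  Sigma.ι (fun n : ℤ => (zpow F n).obj X) n

lemma inc_iso (X : A) (n : ℤ) : F.map (inc F X n) ≫ (LamObj F X).iso.inv =
    (shiftIso F n).hom.app X ≫ inc F X (n + 1) := ι_LamIso F X n

variable {F} in
lemma inc_ext {X : A} {Y : A} {f g : (LamObj F X).pt ⟶ Y} (h : ∀ n, inc F X n ≫ f = inc F X n ≫ g) :
    f = g := Sigma.hom_ext _ _ h

variable {F}

lemma inc_rel {X : A} {Y : FCat F} (u : LamObj F X ⟶ Y) (n : ℤ) :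
    F.map (inc F X n ≫ u.1) ≫ Y.iso.inv = (shiftIso F n).hom.app X ≫ inc F X (n + 1) ≫ u.1 := by
  rw [F.map_comp, Category.assoc, ← hom_w_inv, ← Category.assoc, inc_iso, Category.assoc]

/-- build a morphism -/
noncomputable def mkHom {X : A} {Y : FCat F} (g : ∀ n, (zpow F n).obj X ⟶ Y.pt)
    (hg : ∀ n, F.map (g n) ≫ Y.iso.inv = (shiftIso F n).hom.app X ≫ g (n + 1)) : LamObj F X ⟶ Y :=
  ⟨(Sigma.desc g : (∐ fun n : ℤ => (zpow F n).obj X) ⟶ Y.pt), by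
    have hd : ∀ n, inc F X n ≫ (Sigma.desc g : (∐ fun n : ℤ => (zpow F n).obj X) ⟶ Y.pt) = g n :=
      fun n => Sigma.ι_desc g n
    generalize (Sigma.desc g : (∐ fun n : ℤ => (zpow F n).obj X) ⟶ Y.pt) = d at hd
    change (LamObj F X).pt ⟶ Y.pt at d
    rw [← Iso.eq_inv_comp, ← Category.assoc, ← Iso.comp_inv_eq]
    apply (isColimitOfPreserves F (coproductIsCoproduct (fun n : ℤ => (zpow F n).obj X))).hom_ext
    rintro ⟨n⟩
    change F.map (inc F X n) ≫ F.map d ≫ Y.iso.inv = F.map (inc F X n) ≫ (LamObj F X).iso.inv ≫ d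
    rw [← Category.assoc, ← F.map_comp, ← Category.assoc, inc_iso, Category.assoc, hd, hd, hg]⟩

lemma inc_mkHom {X : A} {Y : FCat F} (g : ∀ n, (zpow F n).obj X ⟶ Y.pt)
    (hg : ∀ n, F.map (g n) ≫ Y.iso.inv = (shiftIso F n).hom.app X ≫ g (n + 1)) (n : ℤ) :
    inc F X n ≫ (mkHom g hg).1 = g n := Sigma.ι_desc g n

/-- family -/
noncomputable def famNat {X : A} {Y : FCat F} (f : X ⟶ Y.pt) : ∀ n : ℕ, (npow F n).obj X ⟶ Y.pt
  | 0 => f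
  | n + 1 => F.map (famNat f n) ≫ Y.iso.inv

/-- family -/
noncomputable def famNeg {X : A} {Y : FCat F} (f : X ⟶ Y.pt) : ∀ n : ℕ, (npow F.inv n).obj X ⟶ Y.pt
  | 0 => f
  | n + 1 => F.preimage (F.asEquivalence.counitIso.hom.app ((npow F.inv n).obj X) ≫
      famNeg f n ≫ Y.iso.hom)

/-- family -/
noncomputable def fam {X : A} {Y : FCat F} (f : X ⟶ Y.pt) : ∀ n : ℤ, (zpow F n).obj X ⟶ Y.pt
  | Int.ofNat n => famNat f n
  | Int.negSucc n => famNeg f (n + 1)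

lemma famNeg_rel {X : A} {Y : FCat F} (f : X ⟶ Y.pt) (n : ℕ) :
    F.map (famNeg f (n + 1)) ≫ Y.iso.inv =
      F.asEquivalence.counitIso.hom.app ((npow F.inv n).obj X) ≫ famNeg f n := by
  rw [famNeg, F.map_preimage]
  have h : ∀ {P Q : A} (c : P ⟶ Q) (g : Q ⟶ Y.pt), (c ≫ g ≫ Y.iso.hom) ≫ Y.iso.inv = c ≫ g := by
    intros; simp
  exact h _ _

lemma fam_rel {X : A} {Y : FCat F} (f : X ⟶ Y.pt) : ∀ n : ℤ,
    F.map (fam f n) ≫ Y.iso.inv = (shiftIso F n).hom.app X ≫ fam f (n + 1)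
  | Int.ofNat n => (Category.id_comp (famNat f (n + 1))).symm
  | Int.negSucc 0 => famNeg_rel f 0
  | Int.negSucc (k + 1) => famNeg_rel f (k + 1)

/-- evaluation -/
noncomputable def ev {X : A} {Y : FCat F} (u : LamObj F X ⟶ Y) : X ⟶ Y.pt :=
  (inc F X 0 ≫ u.1 : (zpow F 0).obj X ⟶ Y.pt)

lemma ev_inj {X : A} {Y : FCat F} {u u' : LamObj F X ⟶ Y} (h : ev u = ev u') : u = u' := by
  refine hom_ext (inc_ext fun n => ?_)
  induction n using Int.induction_on with
  | zero => exact h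
  | succ n ih =>
    rw [← cancel_epi ((shiftIso F n).hom.app X), ← inc_rel, ← inc_rel, ih]
  | pred n ih =>
    have key : inc F X (-(n : ℤ) - 1 + 1) ≫ u.1 = inc F X (-(n : ℤ) - 1 + 1) ≫ u'.1 := by
      rw [sub_add_cancel]; exact ih
    apply F.map_injective
    rw [← cancel_mono Y.iso.inv, inc_rel, inc_rel, key]

/-- equivalence -/
noncomputable def evEquiv (X : A) (Y : FCat F) : (LamObj F X ⟶ Y) ≃ (X ⟶ Y.pt) :=
  Equiv.ofBijective ev ⟨fun _ _ h => ev_inj h, fun f =>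
    ⟨mkHom (fam f) (fam_rel f), inc_mkHom (fam f) (fam_rel f) 0⟩⟩

/-- map -/
noncomputable def LamMap {X X' : A} (f : X ⟶ X') : LamObj F X ⟶ LamObj F X' :=
  mkHom (fun n => (zpow F n).map f ≫ inc F X' n) (fun n => by
    have := (shiftIso F n).hom.naturality f
    dsimp at this
    rw [F.map_comp, Category.assoc, inc_iso, ← Category.assoc, this, Category.assoc])

lemma inc_LamMap {X X' : A} (f : X ⟶ X') (n : ℤ) :
    inc F X n ≫ (LamMap (F := F) f).1 = (zpow F n).map f ≫ inc F X' n := inc_mkHom _ _ n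

variable (F) in
/-- functor -/
noncomputable def Lam : A ⥤ FCat F where
  obj X := LamObj F X
  map f := LamMap f
  map_id X := hom_ext (inc_ext fun n => by simp [inc_LamMap])
  map_comp f g := hom_ext (inc_ext fun n => by
    rw [inc_LamMap, comp_val, ← Category.assoc, inc_LamMap, Category.assoc, inc_LamMap]; simp)

lemma ev_LamMap {X X' : A} {Y : FCat F} (f : X ⟶ X') (u : LamObj F X' ⟶ Y) :
    ev (LamMap f ≫ u) = f ≫ ev u := by
  change inc F X 0 ≫ (LamMap f).1 ≫ u.1 = (zpow F 0).map f ≫ inc F X' 0 ≫ u.1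
  rw [← Category.assoc, inc_LamMap, Category.assoc]

variable (F) in
/-- adjunction -/
noncomputable def adj : Lam F ⊣ forgetF F :=
  Adjunction.mkOfHomEquiv
    { homEquiv := evEquiv
      homEquiv_naturality_left_symm := fun {X' X Y} f g => by
        apply (evEquiv X' Y).injective
        refine ((evEquiv X' Y).apply_symm_apply _).trans ?_
        refine Eq.trans ?_ (ev_LamMap f ((evEquiv X Y).symm g)).symm
        exact congrArg (fun z => f ≫ z) ((evEquiv X Y).apply_symm_apply g).symm
      homEquiv_naturality_right := fun {X Y Y'} f g => (Category.assoc _ _ _).symm }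

end FCat

namespace FCat

variable {A : Type u} [Category.{v} A] [Abelian A] (F : A ⥤ A) [F.IsEquivalence]
  [HasCoproducts.{0} A]

/-- underlying functor -/
noncomputable def Lam0 : A ⥤ (Discrete ℤ ⥤ A) := (Discrete.functor (zpow F)).flip

lemma Lam0_pres : PreservesFiniteLimits (Lam0 F) :=
  ⟨fun J _ _ => preservesLimitsOfShape_of_evaluation _ _ (fun n => by
    change PreservesLimitsOfShape J (zpow F n.as)
    infer_instance)⟩

/-- comparison on objects -/
noncomputable def compIso (X : A) : colimit ((Lam0 F).obj X) ≅ (LamObj F X).pt :=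
  HasColimit.isoOfNatIso
    (Discrete.natIso (fun n => (Iso.refl ((zpow F n.as).obj X) :)) :
      (Lam0 F).obj X ≅ Discrete.functor fun n : ℤ => (zpow F n).obj X)

/-- inclusion into the colimit -/
noncomputable def inc0 (X : A) (n : ℤ) : (zpow F n).obj X ⟶ colimit ((Lam0 F).obj X) :=
  colimit.ι ((Lam0 F).obj X) ⟨n⟩

lemma inc0_compIso (X : A) (n : ℤ) : inc0 F X n ≫ (compIso F X).hom = inc F X n :=
  (HasColimit.isoOfNatIso_ι_hom _ _).trans (Category.id_comp (inc F X n))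

lemma inc0_map {X Y : A} (f : X ⟶ Y) (n : ℤ) :
    inc0 F X n ≫ colim.map ((Lam0 F).map f) = (zpow F n).map f ≫ inc0 F Y n :=
  colimit.ι_map ((Lam0 F).map f) (⟨n⟩ : Discrete ℤ)

lemma comp_nat {X Y : A} (f : X ⟶ Y) : colim.map ((Lam0 F).map f) ≫ (compIso F Y).hom =
    (compIso F X).hom ≫ (LamMap (F := F) f).1 := by
  refine colimit.hom_ext fun n => ?_
  change inc0 F X n.as ≫ colim.map ((Lam0 F).map f) ≫ (compIso F Y).hom =
    inc0 F X n.as ≫ (compIso F X).hom ≫ (LamMap (F := F) f).1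
  have h2 : ∀ {T : A} (q : colimit ((Lam0 F).obj Y) ⟶ T),
    inc0 F X n.as ≫ colim.map ((Lam0 F).map f) ≫ q = (zpow F n.as).map f ≫ inc0 F Y n.as ≫ q := by
    intro T q
    have := congrArg (fun z => z ≫ q) (inc0_map F f n.as)
    simpa only [Category.assoc] using this
  rw [h2, inc0_compIso, ← Category.assoc, inc0_compIso, inc_LamMap]

/-- comparison -/
noncomputable def Lam0Iso : Lam0 F ⋙ colim ≅ Lam F ⋙ forgetF F :=
  NatIso.ofComponents (fun X => compIso F X) (fun f => comp_nat F f)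

lemma Lam_pres [HasExactColimitsOfShape (Discrete ℤ) A] : PreservesFiniteLimits (Lam F) := by
  have := Lam0_pres F
  have h : PreservesFiniteLimits (Lam F ⋙ forgetF F) := preservesFiniteLimits_of_natIso (Lam0Iso F)
  exact ⟨fun J _ _ => preservesLimitsOfShape_of_reflects_of_preserves (Lam F) (forgetF F)⟩

end FCat

/-- Let `A` be a Grothendieck abelian category (abelian, cocomplete, with exact filtered
colimits (AB5) and a generator) and `F : A ⥤ A` an additive equivalence.  Then `F-A` is
abelian and cocomplete, and there is a functor `(−)_F : A ⥤ F-A` whose underlying object at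
`X` is the coproduct `⊕_{n ∈ ℤ} Fⁿ(X)` (with the canonical shift isomorphism), such that:
(i) `((−)_F, for_F)` is an adjoint pair; (ii) `(−)_F` is exact, and `for_F` sends injective
objects of `F-A` to injective objects of `A`; (iii) small filtered colimits exist in `F-A`
and commute with `for_F`; (iv) if `G` is a generator (separator) of `A` then `G_F` is a
generator of `F-A`; (v) `F-A` is a Grothendieck abelian category (abelian, cocomplete,
AB5, and with a generator). -/
theorem stmt8 {A : Type u} [Category.{v} A] [Abelian A] [HasColimits A] [AB5 A]
    (hGen : ∃ G : A, IsSeparator G)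
    (F : A ⥤ A) [F.Additive] [F.IsEquivalence] :
    ∃ (instAb : Abelian (FCat F)) (instColim : HasColimits (FCat F)),
      letI := instAb
      letI := instColim
      ∃ Lam : A ⥤ FCat F,
        (∀ X : A, Nonempty ((Lam.obj X).pt ≅ ∐ fun n : ℤ => (zpow F n).obj X)) ∧
        Nonempty (Lam ⊣ FCat.forgetF F) ∧
        PreservesFiniteLimits Lam ∧
        PreservesFiniteColimits Lam ∧
        (∀ I : FCat F, Injective I → Injective I.pt) ∧
        (∀ (J : Type v) [SmallCategory J] [IsFiltered J], HasColimitsOfShape J (FCat F)) ∧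
        (∀ (J : Type v) [SmallCategory J] [IsFiltered J],
          PreservesColimitsOfShape J (FCat.forgetF F)) ∧
        (∀ G : A, IsSeparator G → IsSeparator (Lam.obj G)) ∧
        AB5 (FCat F) ∧
        (∃ G' : FCat F, IsSeparator G') := by
  have hcp : HasCoproducts.{0} A := hasCoproducts_shrink.{0, v}
  have hbip : HasFiniteBiproducts A := HasFiniteBiproducts.of_hasFiniteProducts
  have hab4 : AB4OfSize.{v} A := AB4.of_AB5 A
  have hab40 : AB4OfSize.{0} A := AB4OfSize_shrink.{0, v} A
  have hex : HasExactColimitsOfShape (Discrete ℤ) A := AB4OfSize.ofShape ℤ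
  have hpl : PreservesFiniteLimits (FCat.Lam F) := FCat.Lam_pres F
  have hfl : HasFiniteLimits (FCat F) := FCat.hasFinLim
  have hpc : PreservesColimits (FCat.Lam F) := (FCat.adj F).leftAdjoint_preservesColimits
  have hpc0 : PreservesColimitsOfSize.{0, 0} (FCat.Lam F) :=
    (FCat.adj F).leftAdjoint_preservesColimits
  have hsep : ∀ G : A, IsSeparator G → IsSeparator ((FCat.Lam F).obj G) := by
    intro G hG
    rw [isSeparator_def] at hG ⊢
    intro X Y f g h
    refine FCat.hom_ext (hG _ _ fun k => ?_)
    have h1 := h (((FCat.adj F).homEquiv G X).symm k)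
    have h2 := congrArg ((FCat.adj F).homEquiv G Y) h1
    rw [Adjunction.homEquiv_naturality_right, Adjunction.homEquiv_naturality_right] at h2
    have h3 := ((FCat.adj F).homEquiv G X).apply_symm_apply k
    exact (congrArg (fun z => z ≫ f.1) h3).symm.trans (h2.trans (congrArg (fun z => z ≫ g.1) h3))
  have hcol : HasColimits (FCat F) := ⟨fun J _ => FCat.hasColim⟩
  have hfil : HasFilteredColimitsOfSize.{v, v} (FCat F) := ⟨fun J _ _ => FCat.hasColim⟩
  have hab5 : AB5OfSize.{v, v} (FCat F) :=
    ⟨fun J _ _ => HasExactColimitsOfShape.domain_of_functor J (FCat.forgetF F)⟩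
  refine ⟨FCat.abelianFCat, ⟨fun J _ => FCat.hasColim⟩, FCat.Lam F, fun X => ⟨Iso.refl _⟩,
    ⟨FCat.adj F⟩, hpl, ⟨fun J _ _ => inferInstance⟩, ?_, ?_, ?_, hsep, hab5, ?_⟩
  · intro I hI
    exact (FCat.adj F).map_injective I hI
  · intro J _ _
    exact FCat.hasColim
  · intro J _ _
    infer_instance
  · obtain ⟨G, hG⟩ := hGen
    exact ⟨_, hsep G hG⟩
end
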